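/- Let G be a finite simple connected graph on n vertices. If the LCM lattice of the edge ideal I(G) is graded, then its maximal rank equals n − 1; moreover if G is not gap-free then L_{I(G)} contains a saturated chain from bottom to top of length n − 2, so L_{I(G)} is not graded. -/

import Mathlib

/-! In the LCM lattice of a connected graph, a nonempty element `S ≠ univ` is covered by `S`
together with any outside vertex adjacent to it, so `S` is joined to `univ` by a saturated chain of
length `#Sᶜ`. An edge covers `∅`, so starting with an edge takes in two vertices in one step and
gives a chain of length `n - 1` from bottom to top. When two disjoint edges form a gap, the second
one can only be added to the first as a whole, which saves one more step. A rank function assigns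
the same length to all saturated chains with given endpoints. -/

/-- A finset of vertices is a union of edges of `G` if every vertex in it has a
neighbor in it. -/
def IsUnionOfEdges {V : Type*} (G : SimpleGraph V) (S : Finset V) : Prop :=
  ∀ v ∈ S, ∃ w ∈ S, G.Adj v w

/-- The LCM lattice of the edge ideal `I(G)`, ordered by inclusion; the bottom element
is `∅` and (for `G` with no isolated vertices) the top element is `univ`. -/
abbrev EdgeLcmLattice {V : Type*} (G : SimpleGraph V) : Type _ :=
  {S : Finset V // IsUnionOfEdges G S}

/-- A finite lattice is graded if there is an order-preserving `ρ` increasing by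
exactly 1 along covers. -/
def IsGradedOrder (L : Type*) [Preorder L] : Prop :=
  ∃ ρ : L → ℤ, (∀ x y : L, x < y → ρ x < ρ y) ∧ ∀ x y : L, x ⋖ y → ρ y = ρ x + 1

/-- `G` is gap-free: no induced subgraph consisting of two disjoint edges. -/
def GapFree {V : Type*} (G : SimpleGraph V) : Prop :=
  ¬ ∃ a b c d : V, G.Adj a b ∧ G.Adj c d ∧ a ≠ c ∧ a ≠ d ∧ b ≠ c ∧ b ≠ d ∧
    ¬ G.Adj a c ∧ ¬ G.Adj a d ∧ ¬ G.Adj b c ∧ ¬ G.Adj b d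

open Finset

section SaturatedChain

variable {L : Type*} {k l : ℕ} {x y z : L}

/-- `x` and `y` are joined by a saturated chain of length `k`. The chain is encoded by a sequence
on `ℕ`, of which only the first `k + 1` terms matter. -/
def HasSaturatedChain [LT L] (k : ℕ) (x y : L) : Prop :=
  ∃ f : ℕ → L, f 0 = x ∧ f k = y ∧ ∀ i < k, f i ⋖ f (i + 1)

theorem HasSaturatedChain.refl [LT L] (x : L) : HasSaturatedChain 0 x x :=
  ⟨fun _ => x, rfl, rfl, by simp⟩

theorem HasSaturatedChain.cons [LT L] (hxy : x ⋖ y) (hyz : HasSaturatedChain k y z) :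
    HasSaturatedChain (k + 1) x z := by
  obtain ⟨f, rfl, rfl, hf⟩ := hyz
  refine ⟨fun i => i.casesOn x f, rfl, rfl, fun i hi => ?_⟩
  cases i with
  | zero => exact hxy
  | succ i => exact hf i (Nat.lt_of_succ_lt_succ hi)

theorem HasSaturatedChain.rank_eq [LT L] {R : Type*} [AddMonoidWithOne R] {ρ : L → R}
    (hρ : ∀ x y : L, x ⋖ y → ρ y = ρ x + 1) (hxy : HasSaturatedChain k x y) :
    ρ y = ρ x + k := by
  obtain ⟨f, rfl, rfl, hf⟩ := hxy
  induction k with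
  | zero => simp
  | succ k ih =>
    rw [hρ _ _ (hf k k.lt_succ_self), ih fun i hi => hf i (Nat.lt_succ_of_lt hi), add_assoc,
      Nat.cast_succ]

theorem IsGradedOrder.length_eq [Preorder L] (hL : IsGradedOrder L)
    (hk : HasSaturatedChain k x y) (hl : HasSaturatedChain l x y) : k = l := by
  obtain ⟨ρ, -, hρ⟩ := hL
  have hcast : (k : ℤ) = l := add_left_cancel ((hk.rank_eq hρ).symm.trans (hl.rank_eq hρ))
  exact_mod_cast hcast

end SaturatedChain

theorem exists_adj_mem_notMem_of_preconnected {V : Type*} {G : SimpleGraph V} (hG : G.Preconnected)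
    {s : Set V} (hs : s.Nonempty) (hs' : s ≠ Set.univ) : ∃ v ∈ s, ∃ w ∉ s, G.Adj v w := by
  obtain ⟨a, ha⟩ := hs
  obtain ⟨b, hb⟩ := (Set.ne_univ_iff_exists_notMem s).mp hs'
  obtain ⟨p⟩ := hG a b
  obtain ⟨d, -, hd, hd'⟩ := p.exists_boundary_dart s ha hb
  exact ⟨d.fst, hd, d.snd, hd', d.adj⟩

section UnionOfEdges

variable {V : Type*} {G : SimpleGraph V} {S T : Finset V} {v w : V}

theorem isUnionOfEdges_empty : IsUnionOfEdges G ∅ := by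
  simp [IsUnionOfEdges]

variable [DecidableEq V]

theorem isUnionOfEdges_pair (hvw : G.Adj v w) : IsUnionOfEdges G {v, w} := by
  simp [IsUnionOfEdges, hvw, hvw.symm]

theorem IsUnionOfEdges.union (hS : IsUnionOfEdges G S) (hT : IsUnionOfEdges G T) :
    IsUnionOfEdges G (S ∪ T) := by
  intro u hu
  rcases mem_union.mp hu with hu | hu
  · obtain ⟨t, ht, hut⟩ := hS u hu
    exact ⟨t, mem_union_left T ht, hut⟩
  · obtain ⟨t, ht, hut⟩ := hT u hu
    exact ⟨t, mem_union_right S ht, hut⟩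

theorem IsUnionOfEdges.insert_of_adj (hS : IsUnionOfEdges G S) (hv : v ∈ S) (hvw : G.Adj v w) :
    IsUnionOfEdges G (insert w S) := by
  have hunion := hS.union (isUnionOfEdges_pair hvw)
  rwa [union_insert, insert_eq_of_mem (mem_union_left _ hv), union_singleton] at hunion

theorem IsUnionOfEdges.covBy_insert (hS : IsUnionOfEdges G S)
    (hwS : IsUnionOfEdges G (insert w S)) (hw : w ∉ S) :
    (⟨S, hS⟩ : EdgeLcmLattice G) ⋖ ⟨insert w S, hwS⟩ :=
  CovBy.of_image (OrderEmbedding.subtype _) (Finset.covBy_insert hw)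

theorem IsUnionOfEdges.mem_of_subset_union_pair (hT : IsUnionOfEdges G T)
    (hTS : T ⊆ S ∪ {v, w}) (hSv : ∀ u ∈ S, ¬ G.Adj u v) (hv : v ∈ T) : w ∈ T := by
  obtain ⟨t, ht, hvt⟩ := hT v hv
  have htS : t ∉ S := fun htS => hSv t htS hvt.symm
  obtain rfl : t = w := by simpa [htS, hvt.ne'] using hTS ht
  exact ht

theorem IsUnionOfEdges.covBy_union_pair (hS : IsUnionOfEdges G S) (hvw : G.Adj v w)
    (hSv : ∀ u ∈ S, ¬ G.Adj u v) (hSw : ∀ u ∈ S, ¬ G.Adj u w) :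
    (⟨S, hS⟩ : EdgeLcmLattice G) ⋖ ⟨S ∪ {v, w}, hS.union (isUnionOfEdges_pair hvw)⟩ := by
  have hvS : v ∉ S := fun hv => hSw v hv hvw
  have hlt : S ⊂ S ∪ {v, w} :=
    ssubset_iff_subset_not_subset.mpr ⟨subset_union_left, fun h => hvS (h (by simp))⟩
  refine ⟨hlt, ?_⟩
  rintro ⟨T, hT⟩ (hST : S ⊂ T) (hTS : T ⊂ S ∪ {v, w})
  obtain ⟨u, huT, huS⟩ := exists_of_ssubset hST
  have hvw_mem : v ∈ T ∧ w ∈ T := by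
    obtain rfl | rfl : u = v ∨ u = w := by simpa [huS] using hTS.subset huT
    · exact ⟨huT, hT.mem_of_subset_union_pair hTS.subset hSv huT⟩
    · have hTS' : T ⊆ S ∪ {u, v} := pair_comm v u ▸ hTS.subset
      exact ⟨hT.mem_of_subset_union_pair hTS' hSw huT, huT⟩
  exact hTS.not_subset (union_subset hST.subset (by simp [insert_subset_iff, hvw_mem]))

theorem IsUnionOfEdges.hasSaturatedChain_univ [Fintype V] (hG : G.Preconnected)
    (hS : IsUnionOfEdges G S) (hne : S.Nonempty) (huniv : IsUnionOfEdges G univ) :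
    HasSaturatedChain (#Sᶜ) (⟨S, hS⟩ : EdgeLcmLattice G) ⟨univ, huniv⟩ := by
  induction hk : #Sᶜ generalizing S with
  | zero =>
    obtain rfl : S = univ := by simpa using hk
    exact .refl _
  | succ k ih =>
    have hS' : (S : Set V) ≠ Set.univ := by
      intro h
      simp [coe_eq_univ.mp h] at hk
    obtain ⟨v, hv, w, hw, hvw⟩ :=
      exists_adj_mem_notMem_of_preconnected hG (coe_nonempty.mpr hne) hS'
    have hcard : #(insert w S)ᶜ = k := by
      rw [compl_insert, card_erase_of_mem (mem_compl.mpr hw), hk, Nat.add_sub_cancel]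
    exact .cons (hS.covBy_insert (hS.insert_of_adj hv hvw) hw) (ih _ (insert_nonempty w S) hcard)

end UnionOfEdges

section ChainLength

variable {V : Type*} [Fintype V] {G : SimpleGraph V} {v w : V}

theorem hasSaturatedChain_of_adj (hG : G.Preconnected) (hvw : G.Adj v w)
    (huniv : IsUnionOfEdges G univ) :
    HasSaturatedChain (Fintype.card V - 1) (⟨∅, isUnionOfEdges_empty⟩ : EdgeLcmLattice G)
      ⟨univ, huniv⟩ := by
  classical
  have hedge := isUnionOfEdges_empty.union (isUnionOfEdges_pair hvw)
  have hcard : #(∅ ∪ {v, w} : Finset V) = 2 := by simp [hvw.ne]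
  have hlength : #(∅ ∪ {v, w} : Finset V)ᶜ + 1 = Fintype.card V - 1 := by
    have := card_le_univ (∅ ∪ {v, w} : Finset V)
    rw [card_compl]
    omega
  rw [← hlength]
  exact .cons (isUnionOfEdges_empty.covBy_union_pair hvw (by simp) (by simp))
    (hedge.hasSaturatedChain_univ hG (by simp) huniv)

theorem hasSaturatedChain_of_not_gapFree (hG : G.Preconnected) (hgap : ¬ GapFree G)
    (huniv : IsUnionOfEdges G univ) :
    HasSaturatedChain (Fintype.card V - 2) (⟨∅, isUnionOfEdges_empty⟩ : EdgeLcmLattice G)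
      ⟨univ, huniv⟩ := by
  classical
  obtain ⟨a, b, c, d, hab, hcd, hac, had, hbc, hbd, nac, nad, nbc, nbd⟩ := not_not.mp hgap
  have hedge := isUnionOfEdges_empty.union (isUnionOfEdges_pair hab)
  have hedges := hedge.union (isUnionOfEdges_pair hcd)
  have hcard : #(∅ ∪ {a, b} ∪ {c, d} : Finset V) = 4 := by
    have hdisj : Disjoint ({a, b} : Finset V) {c, d} := by
      simp [hac.symm, had.symm, hbc.symm, hbd.symm]
    rw [empty_union, card_union_of_disjoint hdisj, card_pair hab.ne, card_pair hcd.ne]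
  have hlength : #(∅ ∪ {a, b} ∪ {c, d} : Finset V)ᶜ + 1 + 1 = Fintype.card V - 2 := by
    have := card_le_univ (∅ ∪ {a, b} ∪ {c, d} : Finset V)
    rw [card_compl]
    omega
  rw [← hlength]
  exact .cons (isUnionOfEdges_empty.covBy_union_pair hab (by simp) (by simp))
    (.cons (hedge.covBy_union_pair hcd (by simp [nac, nbc]) (by simp [nad, nbd]))
      (hedges.hasSaturatedChain_univ hG (by simp) huniv))

end ChainLength

/-- For a connected nontrivial graph on `n` vertices: if the LCM lattice of `I(G)` is
graded then its maximal rank is `n - 1` (any rank function increases by `n - 1` from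
bottom to top); moreover, if `G` is not gap-free then the LCM lattice has a saturated
chain of length `n - 2` from bottom to top, and hence is not graded. -/
theorem graded_rank_and_not_graded_of_gap {V : Type*} [Fintype V] [DecidableEq V]
    (G : SimpleGraph V) (hconn : G.Connected) (hnt : ∃ a b : V, G.Adj a b)
    (n : ℕ) (hn : n = Fintype.card V)
    (bot top : EdgeLcmLattice G)
    (hbot : (bot : Finset V) = ∅) (htop : (top : Finset V) = Finset.univ) :
    (∀ ρ : EdgeLcmLattice G → ℤ,
        (∀ x y : EdgeLcmLattice G, x < y → ρ x < ρ y) →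
        (∀ x y : EdgeLcmLattice G, x ⋖ y → ρ y = ρ x + 1) →
        ρ top - ρ bot = (n : ℤ) - 1) ∧
    (¬ GapFree G →
      (∃ f : ℕ → EdgeLcmLattice G, f 0 = bot ∧ f (n - 2) = top ∧
        ∀ i < n - 2, f i ⋖ f (i + 1)) ∧
      ¬ IsGradedOrder (EdgeLcmLattice G)) := by
  obtain ⟨_, _⟩ := bot
  obtain ⟨_, huniv⟩ := top
  subst hn hbot htop
  obtain ⟨a, b, hab⟩ := hnt
  have hcard : 1 < Fintype.card V := Fintype.one_lt_card_iff.mpr ⟨a, b, hab.ne⟩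
  have hlong := hasSaturatedChain_of_adj hconn.preconnected hab huniv
  refine ⟨fun ρ _ hρ => ?_, fun hgap => ?_⟩
  · rw [hlong.rank_eq hρ, add_sub_cancel_left, Nat.cast_sub hcard.le, Nat.cast_one]
  · have hshort := hasSaturatedChain_of_not_gapFree hconn.preconnected hgap huniv
    refine ⟨hshort, fun hgraded => ?_⟩
    have hlength := hgraded.length_eq hlong hshort
    omega
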